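/- Let log J be an α-Hölder g-function with unique g-measure μ. Then for every α-Hölder a:Ω→ℂ and every fixed x∈Ω, the limit lim_{s→1⁺} (s−1) ζ₊(s) exists and equals (1/h_μ(σ)) ∫_Ω a dμ. -/

import Mathlib

open Real MeasureTheory Filter Topology Set

open scoped Classical

namespace GS

/-- The full shift space `Ω = 𝒜^ℕ`. -/
abbrev Omega (𝒜 : Type) : Type := ℕ → 𝒜

variable {𝒜 : Type}

/-- The left shift `σ(x₁,x₂,…) = (x₂,x₃,…)`. -/
def shift (x : Omega 𝒜) : Omega 𝒜 := fun n => x (n + 1)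

/-- Prepending a symbol: `qx = (q,x₁,x₂,…)`. -/
def cons (q : 𝒜) (x : Omega 𝒜) : Omega 𝒜 := fun n => Nat.casesOn n q x

/-- Concatenation `wx` of a finite word `w ∈ 𝒜^k` with `x ∈ Ω`. -/
def concat {k : ℕ} (w : Fin k → 𝒜) (x : Omega 𝒜) : Omega 𝒜 :=
  fun n => if h : n < k then w ⟨n, h⟩ else x (n - k)

/-- The metric `d(x,y) = 2^{-N(x,y)}`, `N(x,y) = inf{k ≥ 1 : x_k ≠ y_k}`
(sequences are indexed from `0` in Lean, whence the `+ 1`). -/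
noncomputable def dOmega (x y : Omega 𝒜) : ℝ :=
  if x = y then 0 else (1 / 2 : ℝ) ^ (sInf {k : ℕ | x k ≠ y k} + 1)

/-- `a : Ω → E` is `α`-Hölder (w.r.t. `dOmega`):
`Hol_α(a) = sup_{x≠y} ‖a x - a y‖ / d(x,y)^α < ∞`. -/
def IsHolderW (α : ℝ) {E : Type*} [NormedAddCommGroup E] (a : Omega 𝒜 → E) : Prop :=
  ∃ C : ℝ, ∀ x y : Omega 𝒜, ‖a x - a y‖ ≤ C * (dOmega x y) ^ α

/-- The Hölder constant `Hol_α(a) = sup_{x≠y} ‖a x - a y‖ / d(x,y)^α`. -/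
noncomputable def HolConst (α : ℝ) {E : Type*} [NormedAddCommGroup E] (a : Omega 𝒜 → E) : ℝ :=
  sSup {r : ℝ | ∃ x y : Omega 𝒜, x ≠ y ∧ r = ‖a x - a y‖ / (dOmega x y) ^ α}

/-- `J` is a `g`-function: continuous, strictly positive, with `∑_{q∈𝒜} J(qx) = 1`. -/
def IsGFunction [Fintype 𝒜] [TopologicalSpace 𝒜] (J : Omega 𝒜 → ℝ) : Prop :=
  Continuous J ∧ (∀ x, 0 < J x) ∧ ∀ x : Omega 𝒜, ∑ q : 𝒜, J (cons q x) = 1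

/-- The Ruelle transfer operator `(L_f φ)(x) = ∑_{q∈𝒜} e^{f(qx)} φ(qx)`. -/
noncomputable def ruelle [Fintype 𝒜] {E : Type*} [AddCommMonoid E] [Module ℝ E]
    (f : Omega 𝒜 → ℝ) (φ : Omega 𝒜 → E) : Omega 𝒜 → E :=
  fun x => ∑ q : 𝒜, Real.exp (f (cons q x)) • φ (cons q x)

/-- Birkhoff sum `S_k(f) = ∑_{j=0}^{k-1} f ∘ σ^j`. -/
def birkhoff (f : Omega 𝒜 → ℝ) (k : ℕ) (x : Omega 𝒜) : ℝ :=
  ∑ j ∈ Finset.range k, f (shift^[j] x)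

/-- `𝕁(wx) = exp (S_k(log J)(wx))` for a word `w` of length `k`. -/
noncomputable def JBirk (J : Omega 𝒜 → ℝ) (k : ℕ) (w : Fin k → 𝒜) (x : Omega 𝒜) : ℝ :=
  Real.exp (birkhoff (fun z => Real.log (J z)) k (concat w x))

/-- `ζ₊(s) = ∑_{k≥1} ∑_{w∈𝒜^k} a(wx) 𝕁(wx)^s`. -/
noncomputable def zetaPlus [Fintype 𝒜] (J : Omega 𝒜 → ℝ) (a : Omega 𝒜 → ℂ) (x : Omega 𝒜)
    (s : ℝ) : ℂ :=
  ∑' k : ℕ, ∑ w : Fin (k + 1) → 𝒜, a (concat w x) * (((JBirk J (k + 1) w x) ^ s : ℝ) : ℂ)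

/-- `ζ₋(s) = ∑_{k≥1} ∑_{w∈𝒜^k} a(wy) 𝕁(wx)^s`. -/
noncomputable def zetaMinus [Fintype 𝒜] (J : Omega 𝒜 → ℝ) (a : Omega 𝒜 → ℂ) (x y : Omega 𝒜)
    (s : ℝ) : ℂ :=
  ∑' k : ℕ, ∑ w : Fin (k + 1) → 𝒜, a (concat w y) * (((JBirk J (k + 1) w x) ^ s : ℝ) : ℂ)

/-- `L_{log J}^* μ = μ`, i.e. `μ` is a `g`-measure of `J`, tested against continuous functions. -/
def IsGMeasure [Fintype 𝒜] [TopologicalSpace 𝒜] [MeasurableSpace 𝒜]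
    (J : Omega 𝒜 → ℝ) (μ : Measure (Omega 𝒜)) : Prop :=
  IsProbabilityMeasure μ ∧
    ∀ φ : Omega 𝒜 → ℂ, Continuous φ →
      ∫ x, ruelle (fun z => Real.log (J z)) φ x ∂μ = ∫ x, φ x ∂μ

/-- The cylinder set determined by a finite word. -/
def cyl {k : ℕ} (w : Fin k → 𝒜) : Set (Omega 𝒜) := {x | ∀ i : Fin k, x (i : ℕ) = w i}

/-- Entropy of the partition into cylinders of length `n`. -/
noncomputable def blockEntropy [Fintype 𝒜] [MeasurableSpace 𝒜] (μ : Measure (Omega 𝒜))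
    (n : ℕ) : ℝ :=
  ∑ w : Fin n → 𝒜, Real.negMulLog (μ (cyl w)).toReal

/-- Kolmogorov–Sinai entropy `h_μ(σ)` of a shift-invariant measure, computed through the
generating partition into cylinders: `h_μ(σ) = lim_n H_n/n = inf_{n≥1} H_n/n`. -/
noncomputable def KSentropy [Fintype 𝒜] [MeasurableSpace 𝒜] (μ : Measure (Omega 𝒜)) : ℝ :=
  ⨅ n : ℕ, blockEntropy μ (n + 1) / (n + 1)

/-- Topological pressure `P(f) = sup {h_μ(σ) + ∫ f dμ}` over shift-invariant Borel
probability measures. -/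
noncomputable def pressure [Fintype 𝒜] [MeasurableSpace 𝒜] (f : Omega 𝒜 → ℝ) : ℝ :=
  sSup {r : ℝ | ∃ μ : Measure (Omega 𝒜), IsProbabilityMeasure μ ∧
    Measure.map shift μ = μ ∧ r = KSentropy μ + ∫ x, f x ∂μ}

/-- `μ` is an equilibrium state of `f`. -/
def IsEquilibrium [Fintype 𝒜] [MeasurableSpace 𝒜] (f : Omega 𝒜 → ℝ)
    (μ : Measure (Omega 𝒜)) : Prop :=
  IsProbabilityMeasure μ ∧ Measure.map shift μ = μ ∧
    KSentropy μ + ∫ x, f x ∂μ = pressure f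

/-- The Walters class `W(Ω,σ)`:
`sup_{n≥1} sup_{w∈𝒜^n} |S_n(f)(wx) − S_n(f)(wy)| → 0` as `d(x,y) → 0`. -/
def WaltersClass [TopologicalSpace 𝒜] (f : Omega 𝒜 → ℝ) : Prop :=
  Continuous f ∧ ∀ ε > (0:ℝ), ∃ δ > (0:ℝ), ∀ x y : Omega 𝒜, dOmega x y < δ →
    ∀ (n : ℕ) (w : Fin n → 𝒜),
      |birkhoff f n (concat w x) - birkhoff f n (concat w y)| ≤ ε

/-- The set `W*` of finite (nonempty) words over `𝒜`. -/
def Words (𝒜 : Type) : Type := Σ k : ℕ, Fin (k + 1) → 𝒜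

end GS
namespace GS

section Helpers

variable {𝒜 : Type}

/-- Append a letter at the end of a word. -/
def snc {k : ℕ} (w : Fin k → 𝒜) (q : 𝒜) : Fin (k + 1) → 𝒜 := Fin.snoc (α := fun _ => 𝒜) w q

lemma exists_snc {k : ℕ} (w : Fin (k + 1) → 𝒜) : ∃ (v : Fin k → 𝒜) (q : 𝒜), w = snc v q :=
  ⟨Fin.init (α := fun _ => 𝒜) w, w (Fin.last k), by
    unfold snc; exact (Fin.snoc_init_self (α := fun _ => 𝒜) w).symm⟩

lemma sum_snc [Fintype 𝒜] {E : Type*} [AddCommMonoid E] {k : ℕ} (F : (Fin (k + 1) → 𝒜) → E) :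
    ∑ w, F w = ∑ q : 𝒜, ∑ w : Fin k → 𝒜, F (snc w q) := by
  rw [← Fintype.sum_prod_type']
  refine (Fintype.sum_equiv (Fin.snocEquiv (fun _ : Fin (k+1) => 𝒜)) _ _ ?_).symm
  rintro ⟨q, w⟩
  rfl

lemma concat_snc {k : ℕ} (w : Fin k → 𝒜) (q : 𝒜) (x : Omega 𝒜) :
    concat (snc w q) x = concat w (cons q x) := by
  funext n
  unfold concat snc
  rcases lt_trichotomy n k with h | h | h
  · have h' : n < k + 1 := by omega
    simp only [h, h', dif_pos]
    simp [Fin.snoc, h]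
  · subst h
    simp [Fin.snoc, cons]
  · have h1 : ¬ n < k + 1 := by omega
    have h2 : ¬ n < k := by omega
    simp only [h1, h2, dif_neg, not_false_eq_true]
    obtain ⟨m, rfl⟩ : ∃ m, n = k + 1 + m := ⟨n - (k+1), by omega⟩
    have e1 : k + 1 + m - (k + 1) = m := by omega
    have e2 : k + 1 + m - k = m + 1 := by omega
    rw [e1, e2]; rfl

lemma concat_zero (w : Fin 0 → 𝒜) (x : Omega 𝒜) : concat w x = x := by
  funext n; simp [concat]

lemma shift_cons (q : 𝒜) (x : Omega 𝒜) : shift (cons q x) = x := rfl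

lemma cons_shift (x : Omega 𝒜) : cons (x 0) (shift x) = x := by
  funext n; cases n <;> rfl

lemma shift_iter_concat (k : ℕ) (w : Fin k → 𝒜) (x : Omega 𝒜) : shift^[k] (concat w x) = x := by
  induction k generalizing x with
  | zero => simp [concat_zero]
  | succ k ih =>
    obtain ⟨v, q, rfl⟩ := exists_snc w
    rw [concat_snc, Function.iterate_succ_apply', ih, shift_cons]

lemma JBirk_pos (J : Omega 𝒜 → ℝ) (k : ℕ) (w : Fin k → 𝒜) (x : Omega 𝒜) : 0 < JBirk J k w x :=
  Real.exp_pos _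

lemma JBirk_zero (J : Omega 𝒜 → ℝ) (w : Fin 0 → 𝒜) (x : Omega 𝒜) : JBirk J 0 w x = 1 := by
  simp [JBirk, birkhoff]

lemma JBirk_snc {J : Omega 𝒜 → ℝ} (hJ : ∀ x, 0 < J x) {k : ℕ} (w : Fin k → 𝒜) (q : 𝒜)
    (x : Omega 𝒜) :
    JBirk J (k + 1) (snc w q) x = JBirk J k w (cons q x) * J (cons q x) := by
  unfold JBirk birkhoff
  rw [concat_snc, Finset.sum_range_succ, Real.exp_add, shift_iter_concat, Real.exp_log (hJ _)]

lemma dOmega_nonneg (x y : Omega 𝒜) : 0 ≤ dOmega x y := by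
  unfold dOmega; split_ifs <;> positivity

lemma dOmega_le_one (x y : Omega 𝒜) : dOmega x y ≤ 1 := by
  unfold dOmega; split_ifs
  · norm_num
  · exact pow_le_one₀ (by norm_num) (by norm_num)

lemma dOmega_cons (q : 𝒜) (x y : Omega 𝒜) :
    dOmega (cons q x) (cons q y) = dOmega x y * (1/2) := by
  by_cases h : x = y
  · subst h; simp [dOmega]
  · have h' : cons q x ≠ cons q y := fun e => h (by
      rw [← shift_cons q x, e, shift_cons])
    have hne : {k : ℕ | x k ≠ y k}.Nonempty := by
      by_contra hc
      rw [Set.not_nonempty_iff_eq_empty] at hc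
      exact h (funext fun n => by
        by_contra hn
        have : n ∈ {k : ℕ | x k ≠ y k} := hn
        rw [hc] at this; exact this)
    have hm := Nat.sInf_mem hne
    have hS : sInf {k : ℕ | cons q x k ≠ cons q y k} = sInf {k : ℕ | x k ≠ y k} + 1 := by
      apply le_antisymm
      · exact Nat.sInf_le hm
      · have hne' : {k : ℕ | cons q x k ≠ cons q y k}.Nonempty := ⟨_ + 1, hm⟩
        have hm' := Nat.sInf_mem hne'
        rcases hj : sInf {k : ℕ | cons q x k ≠ cons q y k} with _ | j
        · rw [hj] at hm'; exact absurd rfl hm'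
        · rw [hj] at hm'
          have : sInf {k : ℕ | x k ≠ y k} ≤ j := Nat.sInf_le hm'
          omega
    unfold dOmega
    rw [if_neg h, if_neg h', hS, pow_succ]

lemma dOmega_concat (k : ℕ) (w : Fin k → 𝒜) (x y : Omega 𝒜) :
    dOmega (concat w x) (concat w y) = dOmega x y * (1/2) ^ k := by
  induction k generalizing x y with
  | zero => simp [concat_zero]
  | succ k ih =>
    obtain ⟨v, q, rfl⟩ := exists_snc w
    rw [concat_snc, concat_snc, ih, dOmega_cons]; ring

lemma dOmega_le_of_agree {x y : Omega 𝒜} (n : ℕ) (h : ∀ i < n, y i = x i) :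
    dOmega y x ≤ (1/2) ^ n := by
  by_cases e : y = x
  · subst e; simp [dOmega]
  · unfold dOmega
    rw [if_neg e]
    apply pow_le_pow_of_le_one (by norm_num) (by norm_num)
    have hne : {k : ℕ | y k ≠ x k}.Nonempty := by
      by_contra hc
      rw [Set.not_nonempty_iff_eq_empty] at hc
      exact e (funext fun n => by
        by_contra hn
        have : n ∈ {k : ℕ | y k ≠ x k} := hn
        rw [hc] at this; exact this)
    have hm := Nat.sInf_mem hne
    by_contra hlt
    exact hm (h _ (by omega))

lemma continuous_of_holder [TopologicalSpace 𝒜] [DiscreteTopology 𝒜] {E : Type*}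
    [NormedAddCommGroup E] {α C : ℝ} (hα : 0 < α) (f : Omega 𝒜 → E)
    (hf : ∀ x y, ‖f x - f y‖ ≤ C * dOmega x y ^ α) : Continuous f := by
  have hC : ∀ x y, ‖f x - f y‖ ≤ |C| * dOmega x y ^ α := fun x y =>
    (hf x y).trans (mul_le_mul_of_nonneg_right (le_abs_self C)
      (Real.rpow_nonneg (dOmega_nonneg _ _) _))
  rw [continuous_iff_continuousAt]
  intro x
  rw [ContinuousAt, Metric.tendsto_nhds]
  intro ε hε
  have ht : Tendsto (fun n : ℕ => |C| * (((1:ℝ)/2) ^ n) ^ α) atTop (𝓝 0) := by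
    have h1 : Tendsto (fun n : ℕ => ((1:ℝ)/2) ^ n) atTop (𝓝 0) :=
      tendsto_pow_atTop_nhds_zero_of_lt_one (by norm_num) (by norm_num)
    have h2 := (h1.rpow_const (p := α) (Or.inr hα.le)).const_mul |C|
    simpa [Real.zero_rpow hα.ne'] using h2
  obtain ⟨n, hn⟩ := (ht.eventually (gt_mem_nhds hε)).exists
  have hev : ∀ᶠ y in 𝓝 x, ∀ i ∈ Finset.range n, y i = x i := by
    rw [Finset.eventually_all]
    intro i _
    have : Tendsto (fun y : Omega 𝒜 => y i) (𝓝 x) (𝓝 (x i)) := (continuous_apply i).tendsto x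
    rw [nhds_discrete 𝒜, tendsto_pure] at this
    exact this
  filter_upwards [hev] with y hy
  rw [dist_eq_norm]
  refine (hC y x).trans_lt (lt_of_le_of_lt ?_ hn)
  apply mul_le_mul_of_nonneg_left _ (abs_nonneg _)
  exact Real.rpow_le_rpow (dOmega_nonneg _ _)
    (dOmega_le_of_agree n (fun i hi => hy i (Finset.mem_range.2 hi))) hα.le

lemma continuous_cons [TopologicalSpace 𝒜] (q : 𝒜) : Continuous (cons q : Omega 𝒜 → Omega 𝒜) := by
  refine continuous_pi fun n => ?_
  cases n with
  | zero => exact continuous_const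
  | succ n => exact continuous_apply n

lemma JBirk_sum [Fintype 𝒜] [TopologicalSpace 𝒜] {J : Omega 𝒜 → ℝ} (hJ : IsGFunction J) (k : ℕ)
    (x : Omega 𝒜) : ∑ w : Fin k → 𝒜, JBirk J k w x = 1 := by
  induction k generalizing x with
  | zero => simp [JBirk_zero]
  | succ k ih =>
    rw [sum_snc]
    simp_rw [JBirk_snc hJ.2.1, ← Finset.sum_mul, ih, one_mul]
    exact hJ.2.2 x

lemma JBirk_le {J : Omega 𝒜 → ℝ} (hJ : ∀ x, 0 < J x) {θ : ℝ} (hθ : ∀ x, J x ≤ θ) (k : ℕ)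
    (w : Fin k → 𝒜) (x : Omega 𝒜) : JBirk J k w x ≤ θ ^ k := by
  induction k generalizing x with
  | zero => simp [JBirk_zero]
  | succ k ih =>
    obtain ⟨v, q, rfl⟩ := exists_snc w
    rw [JBirk_snc hJ, pow_succ]
    exact mul_le_mul (ih _ _) (hθ _) (hJ _).le ((JBirk_pos J k v (cons q x)).le.trans (ih _ _))

lemma JBirk_dist {J : Omega 𝒜 → ℝ} (hJ : ∀ x, 0 < J x) {α C : ℝ} (hα : 0 < α)
    (hC : ∀ x y, |Real.log (J x) - Real.log (J y)| ≤ C * dOmega x y ^ α) :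
    ∃ D : ℝ, 0 ≤ D ∧ ∀ (k : ℕ) (w : Fin k → 𝒜) (x y : Omega 𝒜),
      |Real.log (JBirk J k w x) - Real.log (JBirk J k w y)| ≤ D * dOmega x y ^ α := by
  set r : ℝ := (1/2 : ℝ) ^ α with hr
  have hr0 : 0 < r := by positivity
  have hr1 : r < 1 := Real.rpow_lt_one (by norm_num) (by norm_num) hα
  have h1r : 0 < 1 - r := by linarith
  refine ⟨|C| * r / (1 - r), by positivity, ?_⟩
  intro k
  induction k with
  | zero =>
    intro w x y
    simp only [JBirk_zero, sub_self, abs_zero]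
    have := Real.rpow_nonneg (dOmega_nonneg x y) α
    positivity
  | succ k ih =>
    intro w x y
    obtain ⟨v, q, rfl⟩ := exists_snc w
    rw [JBirk_snc hJ, JBirk_snc hJ, Real.log_mul (JBirk_pos _ _ _ _).ne' (hJ _).ne',
      Real.log_mul (JBirk_pos _ _ _ _).ne' (hJ _).ne']
    have h1 := ih v (cons q x) (cons q y)
    have h2 := hC (cons q x) (cons q y)
    rw [dOmega_cons, Real.mul_rpow (dOmega_nonneg _ _) (by norm_num), ← hr] at h1 h2
    have hd := Real.rpow_nonneg (dOmega_nonneg x y) α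
    have h3 : C * (dOmega x y ^ α * r) ≤ |C| * (dOmega x y ^ α * r) :=
      mul_le_mul_of_nonneg_right (le_abs_self C) (by positivity)
    have h4 : |C| * r / (1 - r) * (dOmega x y ^ α * r) + |C| * (dOmega x y ^ α * r)
        = |C| * r / (1 - r) * dOmega x y ^ α := by field_simp; ring
    calc _ = |(Real.log (JBirk J k v (cons q x)) - Real.log (JBirk J k v (cons q y)))
          + (Real.log (J (cons q x)) - Real.log (J (cons q y)))| := by congr 1; ring
      _ ≤ _ := abs_add_le _ _
      _ ≤ _ := by linarith

lemma exp_sub_exp_abs (a b : ℝ) : |Real.exp a - Real.exp b| ≤ |a - b| * (Real.exp a + Real.exp b) := by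
  have key : ∀ a b : ℝ, Real.exp a - Real.exp b ≤ |a - b| * (Real.exp a + Real.exp b) := by
    intro a b
    have h1 : Real.exp b = Real.exp a * Real.exp (b - a) := by rw [← Real.exp_add]; congr 1; ring
    have h2 := Real.add_one_le_exp (b - a)
    have h3 : Real.exp a * ((b - a) + 1) ≤ Real.exp b := by
      rw [h1]; exact mul_le_mul_of_nonneg_left h2 (Real.exp_pos a).le
    have h4 : (a - b) * Real.exp a ≤ |a - b| * Real.exp a :=
      mul_le_mul_of_nonneg_right (le_abs_self _) (Real.exp_pos a).le
    have h5 : 0 ≤ |a - b| * Real.exp b := by positivity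
    nlinarith
  rw [abs_le]
  constructor
  · have := key b a; rw [abs_sub_comm b a] at this; linarith
  · exact key a b

/-- Quantitative regularity data extracted from the hypotheses on `J`. -/
structure Reg [Fintype 𝒜] (J : Omega 𝒜 → ℝ) (α θ M D : ℝ) : Prop where
  pos : ∀ x, 0 < J x
  hsum : ∀ (k : ℕ) (x : Omega 𝒜), ∑ w : Fin k → 𝒜, JBirk J k w x = 1
  sum1 : ∀ x, ∑ q : 𝒜, J (cons q x) = 1
  le : ∀ x, J x ≤ θ
  θpos : 0 < θ
  θlt : θ < 1
  αpos : 0 < α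
  hM : ∀ x, -Real.log (J x) ≤ M
  Dnn : 0 ≤ D
  dist : ∀ (k : ℕ) (w : Fin k → 𝒜) (x y : Omega 𝒜),
      |Real.log (JBirk J k w x) - Real.log (JBirk J k w y)| ≤ D * dOmega x y ^ α

/-- Iterates of the transfer operator. -/
noncomputable def T [Fintype 𝒜] (J : Omega 𝒜 → ℝ) (s : ℝ) (k : ℕ) (f : Omega 𝒜 → ℂ)
    (x : Omega 𝒜) : ℂ :=
  ∑ w : Fin k → 𝒜, f (concat w x) * ((JBirk J k w x ^ s : ℝ) : ℂ)

/-- The transfer operator. -/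
noncomputable def Ls [Fintype 𝒜] (J : Omega 𝒜 → ℝ) (s : ℝ) (f : Omega 𝒜 → ℂ)
    (x : Omega 𝒜) : ℂ :=
  ∑ q : 𝒜, ((J (cons q x) ^ s : ℝ) : ℂ) * f (cons q x)

variable [Fintype 𝒜] {J : Omega 𝒜 → ℝ} {α θ M D : ℝ}

lemma T_zero (s : ℝ) (f : Omega 𝒜 → ℂ) (x : Omega 𝒜) : T J s 0 f x = f x := by
  simp [T, JBirk_zero, concat_zero]

lemma T_succ (hR : Reg J α θ M D) (s : ℝ) (k : ℕ) (f : Omega 𝒜 → ℂ) (x : Omega 𝒜) :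
    T J s (k + 1) f x = Ls J s (T J s k f) x := by
  unfold T Ls
  rw [sum_snc]
  refine Finset.sum_congr rfl fun q _ => ?_
  rw [Finset.mul_sum]
  refine Finset.sum_congr rfl fun w _ => ?_
  rw [concat_snc, JBirk_snc hR.pos, Real.mul_rpow (JBirk_pos _ _ _ _).le (hR.pos _).le]
  push_cast; ring

lemma JBirk_rpow_le (hR : Reg J α θ M D) {s : ℝ} (hs : 1 ≤ s) (k : ℕ) (w : Fin k → 𝒜)
    (x : Omega 𝒜) : JBirk J k w x ^ s ≤ JBirk J k w x * (θ ^ (s - 1)) ^ k := by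
  have hp := JBirk_pos J k w x
  have h1 : JBirk J k w x ^ s = JBirk J k w x * JBirk J k w x ^ (s - 1) := by
    nth_rewrite 2 [← Real.rpow_one (JBirk J k w x)]
    rw [← Real.rpow_add hp]; congr 1; ring
  rw [h1]
  apply mul_le_mul_of_nonneg_left _ hp.le
  have h2 := Real.rpow_le_rpow hp.le (JBirk_le hR.pos hR.le k w x) (by linarith : 0 ≤ s - 1)
  refine h2.trans (le_of_eq ?_)
  rw [← Real.rpow_natCast, ← Real.rpow_natCast, ← Real.rpow_mul hR.θpos.le,
    ← Real.rpow_mul hR.θpos.le, mul_comm]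

lemma sum_JBirk_rpow_le (hR : Reg J α θ M D) {s : ℝ} (hs : 1 ≤ s) (k : ℕ)
    (x : Omega 𝒜) : ∑ w : Fin k → 𝒜, JBirk J k w x ^ s ≤ (θ ^ (s - 1)) ^ k := by
  calc _ ≤ ∑ w : Fin k → 𝒜, JBirk J k w x * (θ ^ (s - 1)) ^ k :=
        Finset.sum_le_sum fun w _ => JBirk_rpow_le hR hs k w x
    _ = _ := by rw [← Finset.sum_mul, hR.hsum, one_mul]

lemma norm_ofReal_nn {r : ℝ} (h : 0 ≤ r) : ‖(r : ℂ)‖ = r := by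
  rw [Complex.norm_real, Real.norm_of_nonneg h]

lemma T_norm_le (hR : Reg J α θ M D) {s : ℝ} (hs : 1 ≤ s) {f : Omega 𝒜 → ℂ} {B : ℝ}
    (hB : ∀ x, ‖f x‖ ≤ B) (k : ℕ) (x : Omega 𝒜) :
    ‖T J s k f x‖ ≤ B * (θ ^ (s - 1)) ^ k := by
  have hB0 : 0 ≤ B := (norm_nonneg _).trans (hB x)
  calc ‖T J s k f x‖ ≤ ∑ w : Fin k → 𝒜, B * JBirk J k w x ^ s := by
        refine norm_sum_le_of_le _ fun w _ => ?_
        have := Real.rpow_nonneg (JBirk_pos J k w x).le s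
        rw [norm_mul, norm_ofReal_nn this]
        exact mul_le_mul_of_nonneg_right (hB _) this
    _ ≤ _ := by
        rw [← Finset.mul_sum]
        exact mul_le_mul_of_nonneg_left (sum_JBirk_rpow_le hR hs k x) hB0

lemma concat_holder (hR : Reg J α θ M D) {f : Omega 𝒜 → ℂ} {C : ℝ} (hC0 : 0 ≤ C)
    (hC : ∀ x y, ‖f x - f y‖ ≤ C * dOmega x y ^ α) (k : ℕ) (w : Fin k → 𝒜) (x y : Omega 𝒜) :
    ‖f (concat w x) - f (concat w y)‖ ≤ C * dOmega x y ^ α := by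
  refine (hC _ _).trans (mul_le_mul_of_nonneg_left ?_ hC0)
  refine Real.rpow_le_rpow (dOmega_nonneg _ _) ?_ hR.αpos.le
  rw [dOmega_concat]
  exact mul_le_of_le_one_right (dOmega_nonneg _ _) (pow_le_one₀ (by norm_num) (by norm_num))

lemma JBirk_rpow_sub (hR : Reg J α θ M D) {s : ℝ} (hs : 1 ≤ s) (hs2 : s ≤ 2) (k : ℕ)
    (w : Fin k → 𝒜) (x y : Omega 𝒜) :
    |JBirk J k w x ^ s - JBirk J k w y ^ s| ≤
      2 * D * dOmega x y ^ α * (JBirk J k w x ^ s + JBirk J k w y ^ s) := by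
  have hx := JBirk_pos J k w x
  have hy := JBirk_pos J k w y
  rw [Real.rpow_def_of_pos hx, Real.rpow_def_of_pos hy]
  refine (exp_sub_exp_abs _ _).trans (mul_le_mul_of_nonneg_right ?_ (by positivity))
  rw [← sub_mul, abs_mul, abs_of_nonneg (by linarith : 0 ≤ s)]
  have h1 := hR.dist k w x y
  have h0 : 0 ≤ D * dOmega x y ^ α := mul_nonneg hR.Dnn (Real.rpow_nonneg (dOmega_nonneg _ _) _)
  calc _ ≤ (D * dOmega x y ^ α) * 2 := mul_le_mul h1 hs2 (by linarith) h0
    _ = _ := by ring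

lemma T_diff (hR : Reg J α θ M D) {s : ℝ} (hs : 1 ≤ s) (hs2 : s ≤ 2) {f : Omega 𝒜 → ℂ} {B C : ℝ}
    (hB : ∀ x, ‖f x‖ ≤ B) (hC0 : 0 ≤ C) (hC : ∀ x y, ‖f x - f y‖ ≤ C * dOmega x y ^ α)
    (k : ℕ) (x y : Omega 𝒜) :
    ‖T J s k f x - T J s k f y‖ ≤ (C + 4 * D * B) * dOmega x y ^ α * (θ ^ (s - 1)) ^ k := by
  have hB0 : 0 ≤ B := (norm_nonneg _).trans (hB x)
  have hd := Real.rpow_nonneg (dOmega_nonneg x y) α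
  have hD := hR.Dnn
  unfold T
  rw [← Finset.sum_sub_distrib]
  calc _ ≤ ∑ w : Fin k → 𝒜, (C * dOmega x y ^ α * JBirk J k w x ^ s +
          B * (2 * D * dOmega x y ^ α * (JBirk J k w x ^ s + JBirk J k w y ^ s))) := by
        refine norm_sum_le_of_le _ fun w _ => ?_
        have e : f (concat w x) * ((JBirk J k w x ^ s : ℝ) : ℂ) -
            f (concat w y) * ((JBirk J k w y ^ s : ℝ) : ℂ) =
            (f (concat w x) - f (concat w y)) * ((JBirk J k w x ^ s : ℝ) : ℂ) +
            f (concat w y) * ((JBirk J k w x ^ s - JBirk J k w y ^ s : ℝ) : ℂ) := by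
          push_cast; ring
        rw [e]
        have hp := Real.rpow_nonneg (JBirk_pos J k w x).le s
        refine (norm_add_le _ _).trans (add_le_add ?_ ?_)
        · rw [norm_mul, norm_ofReal_nn hp]
          exact mul_le_mul_of_nonneg_right (concat_holder hR hC0 hC k w x y) hp
        · rw [norm_mul, Complex.norm_real, Real.norm_eq_abs]
          exact mul_le_mul (hB _) (JBirk_rpow_sub hR hs hs2 k w x y) (abs_nonneg _) hB0
    _ = C * dOmega x y ^ α * (∑ w : Fin k → 𝒜, JBirk J k w x ^ s) +
          B * (2 * D * dOmega x y ^ α * ((∑ w : Fin k → 𝒜, JBirk J k w x ^ s) +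
            ∑ w : Fin k → 𝒜, JBirk J k w y ^ s)) := by
        rw [Finset.sum_add_distrib, ← Finset.mul_sum, ← Finset.mul_sum, ← Finset.mul_sum,
          Finset.sum_add_distrib]
    _ ≤ C * dOmega x y ^ α * (θ ^ (s - 1)) ^ k +
          B * (2 * D * dOmega x y ^ α * ((θ ^ (s - 1)) ^ k + (θ ^ (s - 1)) ^ k)) := by
        have h1 := sum_JBirk_rpow_le hR hs k x
        have h2 := sum_JBirk_rpow_le hR hs k y
        gcongr
    _ = _ := by ring

/-- Oscillation bound for almost fixed points of `L_{log J}`. -/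
lemma osc_bound (hR : Reg J α θ M D) {v : Omega 𝒜 → ℂ} {B K ε : ℝ}
    (hB : ∀ x, ‖v x‖ ≤ B) (hK0 : 0 ≤ K) (hK : ∀ x y, ‖v x - v y‖ ≤ K * dOmega x y ^ α)
    (hε : ∀ x, ‖v x - Ls J 1 v x‖ ≤ ε) (N : ℕ) (x y : Omega 𝒜) :
    ‖v x - v y‖ ≤ Real.exp D * (2 * N * ε + K * ((1/2 : ℝ) ^ N) ^ α) := by
  have hT : ∀ (n : ℕ) (x : Omega 𝒜), ‖v x - T J 1 n v x‖ ≤ n * ε := by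
    intro n
    induction n with
    | zero => intro x; simp [T_zero]
    | succ n ih =>
      intro x
      rw [T_succ hR]
      have e : v x - Ls J 1 (T J 1 n v) x = (v x - Ls J 1 v x) +
          ∑ q : 𝒜, ((J (cons q x) : ℝ) : ℂ) * (v (cons q x) - T J 1 n v (cons q x)) := by
        simp only [Ls, Real.rpow_one, mul_sub, Finset.sum_sub_distrib]; ring
      rw [e]
      have h2 : ‖∑ q : 𝒜, ((J (cons q x) : ℝ) : ℂ) * (v (cons q x) - T J 1 n v (cons q x))‖
          ≤ ∑ q : 𝒜, J (cons q x) * (n * ε) := by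
        refine norm_sum_le_of_le _ fun q _ => ?_
        rw [norm_mul, norm_ofReal_nn (hR.pos _).le]
        exact mul_le_mul_of_nonneg_left (ih _) (hR.pos _).le
      rw [← Finset.sum_mul, hR.sum1, one_mul] at h2
      refine (norm_add_le _ _).trans ?_
      have := hε x
      push_cast
      linarith
  set S : Set ℝ := Set.range (fun p : Omega 𝒜 × Omega 𝒜 => ‖v p.1 - v p.2‖) with hS
  have hbdd : BddAbove S := by
    refine ⟨B + B, ?_⟩
    rintro _ ⟨p, rfl⟩
    exact (norm_sub_le _ _).trans (add_le_add (hB _) (hB _))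
  set O := sSup S with hO
  have hle : ∀ x y, ‖v x - v y‖ ≤ O := fun x y => le_csSup hbdd ⟨(x, y), rfl⟩
  set β := Real.exp (-D) with hβ
  have hβ0 : 0 < β := Real.exp_pos _
  have hdist : ∀ (w : Fin N → 𝒜) (x y : Omega 𝒜), β * JBirk J N w y ≤ JBirk J N w x := by
    intro w x y
    have h1 := hR.dist N w x y
    have h2 : dOmega x y ^ α ≤ 1 := Real.rpow_le_one (dOmega_nonneg _ _) (dOmega_le_one _ _) hR.αpos.le
    have h3 : D * dOmega x y ^ α ≤ D := mul_le_of_le_one_right hR.Dnn h2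
    have h4 := (abs_le.1 (h1.trans h3)).1
    rw [← Real.exp_log (JBirk_pos J N w x), ← Real.exp_log (JBirk_pos J N w y), hβ,
      ← Real.exp_add, Real.exp_le_exp]
    linarith
  have hmain : ∀ x y, ‖v x - v y‖ ≤ 2 * N * ε + K * ((1/2 : ℝ) ^ N) ^ α + (1 - β) * O := by
    intro x y
    set m : ℂ := ∑ w : Fin N → 𝒜, v (concat w y) * ((JBirk J N w y : ℝ) : ℂ) with hm
    have hs1 : ∀ z, ∑ w : Fin N → 𝒜, ((JBirk J N w z : ℝ) : ℂ) = 1 := by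
      intro z; rw [← Complex.ofReal_sum, hR.hsum]; simp
    have hvm : ∀ z, ‖v z - m‖ ≤ O := by
      intro z
      have e : v z - m = ∑ w : Fin N → 𝒜, (v z - v (concat w y)) * ((JBirk J N w y : ℝ) : ℂ) := by
        simp only [sub_mul, Finset.sum_sub_distrib, ← Finset.mul_sum, hs1, mul_one, hm]
      rw [e]
      have : ‖∑ w : Fin N → 𝒜, (v z - v (concat w y)) * ((JBirk J N w y : ℝ) : ℂ)‖ ≤
          ∑ w : Fin N → 𝒜, O * JBirk J N w y := by
        refine norm_sum_le_of_le _ fun w _ => ?_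
        rw [norm_mul, norm_ofReal_nn (JBirk_pos _ _ _ _).le]
        exact mul_le_mul_of_nonneg_right (hle _ _) (JBirk_pos _ _ _ _).le
      rwa [← Finset.mul_sum, hR.hsum, mul_one] at this
    have e : T J 1 N v x - T J 1 N v y =
        (∑ w : Fin N → 𝒜, (v (concat w x) - v (concat w y)) * ((JBirk J N w x : ℝ) : ℂ)) +
        ∑ w : Fin N → 𝒜, (v (concat w y) - m) * ((JBirk J N w x - β * JBirk J N w y : ℝ) : ℂ) := by
      have e1 : ∑ w : Fin N → 𝒜, (v (concat w y) - m) * ((JBirk J N w x - β * JBirk J N w y : ℝ) : ℂ)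
        = (∑ w : Fin N → 𝒜, v (concat w y) * ((JBirk J N w x : ℝ) : ℂ)) - β * m
          - m * ((∑ w : Fin N → 𝒜, ((JBirk J N w x : ℝ) : ℂ))
            - β * ∑ w : Fin N → 𝒜, ((JBirk J N w y : ℝ) : ℂ)) := by
        rw [hm, Finset.mul_sum, ← Finset.sum_sub_distrib, Finset.mul_sum,
          ← Finset.sum_sub_distrib, ← hm, Finset.mul_sum, ← Finset.sum_sub_distrib]
        refine Finset.sum_congr rfl fun w _ => ?_
        push_cast; ring
      rw [e1, hs1, hs1]
      simp only [T, Real.rpow_one, sub_mul, Finset.sum_sub_distrib]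
      rw [← hm]; ring
    have b1 : ‖∑ w : Fin N → 𝒜, (v (concat w x) - v (concat w y)) * ((JBirk J N w x : ℝ) : ℂ)‖
        ≤ K * ((1/2 : ℝ) ^ N) ^ α := by
      have : ‖∑ w : Fin N → 𝒜, (v (concat w x) - v (concat w y)) * ((JBirk J N w x : ℝ) : ℂ)‖
          ≤ ∑ w : Fin N → 𝒜, (K * ((1/2 : ℝ) ^ N) ^ α) * JBirk J N w x := by
        refine norm_sum_le_of_le _ fun w _ => ?_
        rw [norm_mul, norm_ofReal_nn (JBirk_pos _ _ _ _).le]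
        refine mul_le_mul_of_nonneg_right ((hK _ _).trans ?_) (JBirk_pos _ _ _ _).le
        refine mul_le_mul_of_nonneg_left ?_ hK0
        refine Real.rpow_le_rpow (dOmega_nonneg _ _) ?_ hR.αpos.le
        rw [dOmega_concat]
        exact mul_le_of_le_one_left (by positivity) (dOmega_le_one _ _)
      rwa [← Finset.mul_sum, hR.hsum, mul_one] at this
    have b2 : ‖∑ w : Fin N → 𝒜, (v (concat w y) - m) *
        ((JBirk J N w x - β * JBirk J N w y : ℝ) : ℂ)‖ ≤ (1 - β) * O := by
      have : ‖∑ w : Fin N → 𝒜, (v (concat w y) - m) *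
        ((JBirk J N w x - β * JBirk J N w y : ℝ) : ℂ)‖
          ≤ ∑ w : Fin N → 𝒜, O * (JBirk J N w x - β * JBirk J N w y) := by
        refine norm_sum_le_of_le _ fun w _ => ?_
        have h0 : 0 ≤ JBirk J N w x - β * JBirk J N w y := by linarith [hdist w x y]
        rw [norm_mul, norm_ofReal_nn h0]
        exact mul_le_mul_of_nonneg_right (hvm _) h0
      rw [← Finset.mul_sum, Finset.sum_sub_distrib, ← Finset.mul_sum, hR.hsum, hR.hsum] at this
      linarith
    have e2 : v x - v y = (v x - T J 1 N v x) - (v y - T J 1 N v y)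
        + (T J 1 N v x - T J 1 N v y) := by ring
    rw [e2]
    have n1 := norm_add_le ((v x - T J 1 N v x) - (v y - T J 1 N v y)) (T J 1 N v x - T J 1 N v y)
    have n2 := norm_sub_le (v x - T J 1 N v x) (v y - T J 1 N v y)
    have n3 : ‖T J 1 N v x - T J 1 N v y‖ ≤ K * ((1/2 : ℝ) ^ N) ^ α + (1 - β) * O := by
      rw [e]; exact (norm_add_le _ _).trans (add_le_add b1 b2)
    have n4 := hT N x
    have n5 := hT N y
    linarith
  have hOle : O ≤ 2 * N * ε + K * ((1/2 : ℝ) ^ N) ^ α + (1 - β) * O := by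
    refine csSup_le ⟨_, ⟨(x, y), rfl⟩⟩ ?_
    rintro _ ⟨p, rfl⟩
    exact hmain _ _
  have h5 : β * O ≤ 2 * N * ε + K * ((1/2 : ℝ) ^ N) ^ α := by linarith
  have h6 : Real.exp D * β = 1 := by rw [hβ, ← Real.exp_add]; simp
  calc ‖v x - v y‖ ≤ O := hle x y
    _ = Real.exp D * (β * O) := by rw [← mul_assoc, h6, one_mul]
    _ ≤ _ := mul_le_mul_of_nonneg_left h5 (Real.exp_pos _).le

/-- `∑_{k ≥ 0} L_s^k a`. -/
noncomputable def U (J : Omega 𝒜 → ℝ) (s : ℝ) (a : Omega 𝒜 → ℂ) (x : Omega 𝒜) : ℂ :=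
  ∑' k : ℕ, T J s k a x

lemma rho_lt (hR : Reg J α θ M D) {s : ℝ} (hs : 1 < s) : θ ^ (s - 1) < 1 :=
  Real.rpow_lt_one hR.θpos.le hR.θlt (by linarith)

lemma rho_pos (hR : Reg J α θ M D) (s : ℝ) : 0 < θ ^ (s - 1) := Real.rpow_pos_of_pos hR.θpos _

lemma rho_bound (hR : Reg J α θ M D) {s : ℝ} (hs : 1 < s) (hs2 : s ≤ 2) :
    (s - 1) * (1 - θ ^ (s - 1))⁻¹ ≤ (1 + -Real.log θ) / (-Real.log θ) := by
  have hc : 0 < -Real.log θ := by linarith [Real.log_neg hR.θpos hR.θlt]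
  set c := -Real.log θ with hcdef
  have h1 := rho_lt hR hs
  have hρ : θ ^ (s - 1) * (1 + (s - 1) * c) ≤ 1 := by
    rw [Real.rpow_def_of_pos hR.θpos]
    have h2 := Real.add_one_le_exp ((s - 1) * c)
    calc _ ≤ Real.exp (Real.log θ * (s - 1)) * Real.exp ((s - 1) * c) :=
          mul_le_mul_of_nonneg_left (by linarith) (Real.exp_pos _).le
      _ = 1 := by rw [← Real.exp_add, hcdef, ← Real.exp_zero]; congr 1; ring
  rw [← div_eq_mul_inv, div_le_div_iff₀ (by linarith) hc]
  have h3 : 0 < θ ^ (s - 1) := rho_pos hR s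
  have h4 : (s - 1) * c ≤ c := by nlinarith
  nlinarith

lemma summable_T (hR : Reg J α θ M D) {s : ℝ} (hs : 1 < s) {a : Omega 𝒜 → ℂ} {B : ℝ}
    (hB : ∀ x, ‖a x‖ ≤ B) (x : Omega 𝒜) : Summable fun k => T J s k a x :=
  Summable.of_norm_bounded
    ((summable_geometric_of_lt_one (rho_pos hR s).le (rho_lt hR hs)).mul_left B)
    (fun k => T_norm_le hR hs.le hB k x)

lemma U_norm_le (hR : Reg J α θ M D) {s : ℝ} (hs : 1 < s) {a : Omega 𝒜 → ℂ} {B : ℝ}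
    (hB : ∀ x, ‖a x‖ ≤ B) (x : Omega 𝒜) : ‖U J s a x‖ ≤ B * (1 - θ ^ (s - 1))⁻¹ :=
  tsum_of_norm_bounded
    ((hasSum_geometric_of_lt_one (rho_pos hR s).le (rho_lt hR hs)).mul_left B)
    (fun k => T_norm_le hR hs.le hB k x)

lemma U_diff (hR : Reg J α θ M D) {s : ℝ} (hs : 1 < s) (hs2 : s ≤ 2) {a : Omega 𝒜 → ℂ} {B C : ℝ}
    (hB : ∀ x, ‖a x‖ ≤ B) (hC0 : 0 ≤ C) (hC : ∀ x y, ‖a x - a y‖ ≤ C * dOmega x y ^ α)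
    (x y : Omega 𝒜) :
    ‖U J s a x - U J s a y‖ ≤ (C + 4 * D * B) * dOmega x y ^ α * (1 - θ ^ (s - 1))⁻¹ := by
  unfold U
  rw [← (summable_T hR hs hB x).tsum_sub (summable_T hR hs hB y)]
  exact tsum_of_norm_bounded
    ((hasSum_geometric_of_lt_one (rho_pos hR s).le (rho_lt hR hs)).mul_left _)
    (fun k => T_diff hR hs.le hs2 hB hC0 hC k x y)

lemma U_eq_zeta (hR : Reg J α θ M D) {s : ℝ} (hs : 1 < s) {a : Omega 𝒜 → ℂ} {B : ℝ}
    (hB : ∀ x, ‖a x‖ ≤ B) (x : Omega 𝒜) : U J s a x = a x + zetaPlus J a x s := by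
  unfold U
  rw [(summable_T hR hs hB x).tsum_eq_zero_add, T_zero]
  rfl

lemma U_fix (hR : Reg J α θ M D) {s : ℝ} (hs : 1 < s) {a : Omega 𝒜 → ℂ} {B : ℝ}
    (hB : ∀ x, ‖a x‖ ≤ B) (x : Omega 𝒜) : U J s a x = a x + Ls J s (U J s a) x := by
  unfold U
  rw [(summable_T hR hs hB x).tsum_eq_zero_add, T_zero]
  congr 1
  simp_rw [T_succ hR]
  unfold Ls
  rw [Summable.tsum_finsetSum (fun q _ => (summable_T hR hs hB (cons q x)).mul_left _)]
  refine Finset.sum_congr rfl fun q _ => ?_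
  rw [tsum_mul_left]

lemma exp_quad {t : ℝ} (ht : 0 ≤ t) : |t - (1 - Real.exp (-t))| ≤ t ^ 2 := by
  have h1 := Real.add_one_le_exp (-t)
  rw [abs_of_nonneg (by linarith)]
  by_cases h : t ≤ 1
  · have := (abs_le.1 (Real.abs_exp_sub_one_sub_id_le (x := -t) (by rw [abs_neg, abs_of_nonneg ht]; exact h))).2
    nlinarith
  · have : Real.exp (-t) ≤ 1 := Real.exp_le_one_iff.2 (by linarith)
    nlinarith

lemma g_pos (hR : Reg J α θ M D) (x : Omega 𝒜) : -Real.log θ ≤ -Real.log (J x) :=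
  neg_le_neg (Real.log_le_log (hR.pos x) (hR.le x))

lemma rpow_one_sub (hR : Reg J α θ M D) {s : ℝ} (x : Omega 𝒜) :
    J x ^ (s - 1) = Real.exp (-((s - 1) * -Real.log (J x))) := by
  rw [Real.rpow_def_of_pos (hR.pos x)]; congr 1; ring

lemma rpow_split (hR : Reg J α θ M D) {s : ℝ} (x : Omega 𝒜) :
    J x ^ s = J x * J x ^ (s - 1) := by
  nth_rewrite 2 [← Real.rpow_one (J x)]
  rw [← Real.rpow_add (hR.pos x)]; congr 1; ring

lemma M_nonneg (hR : Reg J α θ M D) (x : Omega 𝒜) : 0 ≤ M := by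
  have := g_pos hR x
  have := hR.hM x
  have := Real.log_neg hR.θpos hR.θlt
  linarith

/-- `L_s` is close to `L_1`. -/
lemma Ls_close (hR : Reg J α θ M D) {s : ℝ} (hs : 1 < s) {v : Omega 𝒜 → ℂ} {B : ℝ}
    (hB : ∀ x, ‖v x‖ ≤ B) (x : Omega 𝒜) :
    ‖Ls J s v x - Ls J 1 v x‖ ≤ (s - 1) * M * B := by
  have hB0 : 0 ≤ B := (norm_nonneg _).trans (hB x)
  unfold Ls
  rw [← Finset.sum_sub_distrib]
  calc _ ≤ ∑ q : 𝒜, J (cons q x) * ((s - 1) * M * B) := by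
        refine norm_sum_le_of_le _ fun q _ => ?_
        set z := cons q x
        have hg : 0 ≤ -Real.log (J z) := by
          linarith [g_pos hR z, Real.log_neg hR.θpos hR.θlt]
        rw [← sub_mul, Real.rpow_one, ← Complex.ofReal_sub, norm_mul, Complex.norm_real,
          rpow_split hR, rpow_one_sub hR]
        have h1 := Real.add_one_le_exp (-((s - 1) * -Real.log (J z)))
        have h0 : 0 ≤ (s - 1) * -Real.log (J z) := mul_nonneg (by linarith) hg
        have h2 : Real.exp (-((s - 1) * -Real.log (J z))) ≤ 1 := Real.exp_le_one_iff.2 (by linarith)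
        have h3 : (s - 1) * -Real.log (J z) ≤ (s - 1) * M :=
          mul_le_mul_of_nonneg_left (hR.hM z) (by linarith)
        have h4 : ‖J z * Real.exp (-((s - 1) * -Real.log (J z))) - J z‖ ≤ J z * ((s - 1) * M) := by
          rw [← mul_sub_one, norm_mul, Real.norm_of_nonneg (hR.pos z).le, Real.norm_eq_abs,
            abs_of_nonpos (by linarith)]
          exact mul_le_mul_of_nonneg_left (by linarith) (hR.pos z).le
        calc _ ≤ J z * ((s - 1) * M) * B := mul_le_mul h4 (hB z) (norm_nonneg _)
              ((norm_nonneg _).trans h4)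
          _ = _ := by ring
    _ = _ := by rw [← Finset.sum_mul, hR.sum1, one_mul]

variable [TopologicalSpace 𝒜] [DiscreteTopology 𝒜] [MeasurableSpace 𝒜] [BorelSpace 𝒜]

lemma integrable_of_cont {E : Type*} [NormedAddCommGroup E] (μ : Measure (Omega 𝒜))
    [IsProbabilityMeasure μ] {f : Omega 𝒜 → E} (hf : Continuous f) : Integrable f μ :=
  hf.integrable_of_hasCompactSupport (HasCompactSupport.of_compactSpace _)

set_option linter.unusedSectionVars false

lemma gm_complex (hR : Reg J α θ M D) {μ : Measure (Omega 𝒜)} (hμ : IsGMeasure J μ)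
    {φ : Omega 𝒜 → ℂ} (hφ : Continuous φ) :
    ∫ x, (∑ q : 𝒜, ((J (cons q x) : ℝ) : ℂ) * φ (cons q x)) ∂μ = ∫ x, φ x ∂μ := by
  rw [← hμ.2 φ hφ]
  congr 1
  funext x
  unfold ruelle
  refine Finset.sum_congr rfl fun q _ => ?_
  rw [Real.exp_log (hR.pos _), Complex.real_smul]

lemma gm_real (hR : Reg J α θ M D) {μ : Measure (Omega 𝒜)} (hμ : IsGMeasure J μ)
    {φ : Omega 𝒜 → ℝ} (hφ : Continuous φ) :
    ∫ x, (∑ q : 𝒜, J (cons q x) * φ (cons q x)) ∂μ = ∫ x, φ x ∂μ := by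
  have h := gm_complex hR hμ (φ := fun x => (φ x : ℂ)) (Complex.continuous_ofReal.comp hφ)
  have e : ∀ x : Omega 𝒜, (∑ q : 𝒜, ((J (cons q x) : ℝ) : ℂ) * (φ (cons q x) : ℂ)) =
      ((∑ q : 𝒜, J (cons q x) * φ (cons q x) : ℝ) : ℂ) := by
    intro x; push_cast; rfl
  simp_rw [e] at h
  rw [integral_complex_ofReal, integral_complex_ofReal] at h
  exact_mod_cast h

/-- The quantitative limit. -/
lemma main_est (hR : Reg J α θ M D) (hJc : Continuous J) {μ : Measure (Omega 𝒜)}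
    (hμ : IsGMeasure J μ) {a : Omega 𝒜 → ℂ} {B C : ℝ}
    (hB : ∀ x, ‖a x‖ ≤ B) (hC0 : 0 ≤ C) (hC : ∀ x y, ‖a x - a y‖ ≤ C * dOmega x y ^ α)
    (x : Omega 𝒜) :
    ∃ c1 c2 : ℝ, ∀ (N : ℕ) (s : ℝ), 1 < s → s ≤ 2 →
      ‖((∫ z, -Real.log (J z) ∂μ : ℝ) : ℂ) * (((s - 1 : ℝ) : ℂ) * U J s a x) - ∫ z, a z ∂μ‖ ≤
        c1 * (N + 1) * (s - 1) + c2 * ((1/2 : ℝ) ^ N) ^ α := by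
  have := hμ.1
  have hB0 : 0 ≤ B := (norm_nonneg _).trans (hB x)
  have hM0 := M_nonneg hR x
  have hD := hR.Dnn
  have hlθ := Real.log_neg hR.θpos hR.θlt
  set K0 := (1 + -Real.log θ) / (-Real.log θ) with hK0
  have hK00 : 0 ≤ K0 := div_nonneg (by linarith) (by linarith)
  set B' := B * K0 with hB'
  set K' := (C + 4 * D * B) * K0 with hK'
  have hB'0 : 0 ≤ B' := mul_nonneg hB0 hK00
  have hK'0 : 0 ≤ K' := mul_nonneg (by positivity) hK00
  set E := B + M * B' with hE
  have hE0 : 0 ≤ E := by positivity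
  refine ⟨M ^ 2 * B' + M * (Real.exp D * (2 * E)), M * (Real.exp D * K'), ?_⟩
  intro N s hs hs2
  have hs0 : 0 ≤ s - 1 := by linarith
  have hinv : 0 ≤ (1 - θ ^ (s - 1))⁻¹ := inv_nonneg.2 (by linarith [rho_lt hR hs])
  have hrb := rho_bound hR hs hs2
  set u := U J s a with hu
  set v : Omega 𝒜 → ℂ := fun z => ((s - 1 : ℝ) : ℂ) * u z with hv
  have hvB : ∀ z, ‖v z‖ ≤ B' := by
    intro z
    rw [hv]; simp only
    rw [norm_mul, norm_ofReal_nn hs0]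
    calc _ ≤ (s - 1) * (B * (1 - θ ^ (s - 1))⁻¹) :=
          mul_le_mul_of_nonneg_left (U_norm_le hR hs hB z) hs0
      _ = B * ((s - 1) * (1 - θ ^ (s - 1))⁻¹) := by ring
      _ ≤ _ := mul_le_mul_of_nonneg_left hrb hB0
  have hvK : ∀ y z, ‖v y - v z‖ ≤ K' * dOmega y z ^ α := by
    intro y z
    have hd := Real.rpow_nonneg (dOmega_nonneg y z) α
    rw [hv]; simp only
    rw [← mul_sub, norm_mul, norm_ofReal_nn hs0]
    calc _ ≤ (s - 1) * ((C + 4 * D * B) * dOmega y z ^ α * (1 - θ ^ (s - 1))⁻¹) :=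
          mul_le_mul_of_nonneg_left (U_diff hR hs hs2 hB hC0 hC y z) hs0
      _ = (C + 4 * D * B) * dOmega y z ^ α * ((s - 1) * (1 - θ ^ (s - 1))⁻¹) := by ring
      _ ≤ (C + 4 * D * B) * dOmega y z ^ α * K0 :=
          mul_le_mul_of_nonneg_left hrb (by positivity)
      _ = _ := by ring
  have hvfix : ∀ z, v z - Ls J s v z = ((s - 1 : ℝ) : ℂ) * a z := by
    intro z
    have h1 := U_fix hR hs hB z
    have h2 : Ls J s v z = ((s - 1 : ℝ) : ℂ) * Ls J s u z := by
      unfold Ls; rw [Finset.mul_sum]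
      refine Finset.sum_congr rfl fun q _ => ?_
      rw [hv]; ring
    rw [h2, hv]; simp only
    rw [← hu] at h1
    rw [← mul_sub, h1]; ring
  have hve : ∀ z, ‖v z - Ls J 1 v z‖ ≤ (s - 1) * E := by
    intro z
    have e : v z - Ls J 1 v z = ((s - 1 : ℝ) : ℂ) * a z + (Ls J s v z - Ls J 1 v z) := by
      rw [← hvfix]; ring
    rw [e]
    refine (norm_add_le _ _).trans ?_
    have h1 := Ls_close hR hs hvB z
    have h2 : ‖((s - 1 : ℝ) : ℂ) * a z‖ ≤ (s - 1) * B := by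
      rw [norm_mul, norm_ofReal_nn hs0]; exact mul_le_mul_of_nonneg_left (hB z) hs0
    rw [hE]; linarith
  have hosc := osc_bound hR hvB hK'0 hvK hve N
  have hvc : Continuous v := continuous_of_holder hR.αpos v hvK
  have hac : Continuous a := continuous_of_holder hR.αpos a hC
  have hgc : Continuous fun z => -Real.log (J z) := (hJc.log fun z => (hR.pos z).ne').neg
  have hpc : Continuous fun z => J z ^ (s - 1) :=
    hJc.rpow_const fun z => Or.inl (hR.pos z).ne'
  have hpcv : Continuous fun z => ((J z ^ (s - 1) : ℝ) : ℂ) * v z :=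
    (Complex.continuous_ofReal.comp hpc).mul hvc
  have hgcv : Continuous fun z => ((-Real.log (J z) : ℝ) : ℂ) * v z :=
    (Complex.continuous_ofReal.comp hgc).mul hvc
  have hsac : Continuous fun z => ((s - 1 : ℝ) : ℂ) * a z := continuous_const.mul hac
  have hsgv : Continuous fun z => ((s - 1 : ℝ) : ℂ) * (((-Real.log (J z) : ℝ) : ℂ) * v z) :=
    continuous_const.mul hgcv
  have hvpv : Continuous fun z => v z - ((J z ^ (s - 1) : ℝ) : ℂ) * v z := hvc.sub hpcv
  have hgvx : Continuous fun z => ((-Real.log (J z) : ℝ) : ℂ) * v x :=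
    (Complex.continuous_ofReal.comp hgc).mul continuous_const
  -- the integral identity
  have hid : ∫ z, v z ∂μ - ∫ z, ((J z ^ (s - 1) : ℝ) : ℂ) * v z ∂μ =
      ((s - 1 : ℝ) : ℂ) * ∫ z, a z ∂μ := by
    rw [← gm_complex hR hμ hpcv, ← integral_const_mul]
    have e : ∀ z : Omega 𝒜, (∑ q : 𝒜, ((J (cons q z) : ℝ) : ℂ) *
        (((J (cons q z) ^ (s - 1) : ℝ) : ℂ) * v (cons q z))) = v z - ((s - 1 : ℝ) : ℂ) * a z := by
      intro z
      rw [← hvfix z, sub_sub_cancel]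
      unfold Ls
      refine Finset.sum_congr rfl fun q _ => ?_
      rw [rpow_split hR (s := s)]; push_cast; ring
    simp_rw [e]
    rw [integral_sub (integrable_of_cont μ hvc) (integrable_of_cont μ hsac)]
    ring
  have hsne : ((s - 1 : ℝ) : ℂ) ≠ 0 := by
    rw [Ne, Complex.ofReal_eq_zero]; linarith
  have hgv : ‖∫ z, ((-Real.log (J z) : ℝ) : ℂ) * v z ∂μ - ∫ z, a z ∂μ‖ ≤ M ^ 2 * B' * (s - 1) := by
    have e1 : ((s - 1 : ℝ) : ℂ) * (∫ z, ((-Real.log (J z) : ℝ) : ℂ) * v z ∂μ - ∫ z, a z ∂μ) =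
        ∫ z, (((s - 1) * -Real.log (J z) - (1 - J z ^ (s - 1)) : ℝ) : ℂ) * v z ∂μ := by
      rw [mul_sub, ← hid, ← integral_const_mul, ← integral_sub (integrable_of_cont μ hvc)
        (integrable_of_cont μ hpcv), ← integral_sub (integrable_of_cont μ hsgv)
        (integrable_of_cont μ hvpv)]
      congr 1; funext z; push_cast; ring
    have e2 : ‖∫ z, (((s - 1) * -Real.log (J z) - (1 - J z ^ (s - 1)) : ℝ) : ℂ) * v z ∂μ‖ ≤
        ((s - 1) * M) ^ 2 * B' := by
      have := norm_integral_le_of_norm_le_const (μ := μ)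
        (f := fun z => (((s - 1) * -Real.log (J z) - (1 - J z ^ (s - 1)) : ℝ) : ℂ) * v z)
        (C := ((s - 1) * M) ^ 2 * B') (Filter.Eventually.of_forall fun z => by
          have hg : 0 ≤ -Real.log (J z) := by linarith [g_pos hR z]
          rw [norm_mul, Complex.norm_real, Real.norm_eq_abs, rpow_one_sub hR]
          refine mul_le_mul ((exp_quad (mul_nonneg hs0 hg)).trans ?_) (hvB z) (norm_nonneg _)
            (by positivity)
          have := hR.hM z
          gcongr)
      simpa using this
    rw [← e1, norm_mul, norm_ofReal_nn hs0] at e2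
    have : (s - 1) * ‖∫ z, ((-Real.log (J z) : ℝ) : ℂ) * v z ∂μ - ∫ z, a z ∂μ‖ ≤
      (s - 1) * (M ^ 2 * B' * (s - 1)) := by linarith
    exact le_of_mul_le_mul_left this (by linarith)
  have hgx : ‖((∫ z, -Real.log (J z) ∂μ : ℝ) : ℂ) * v x -
      ∫ z, ((-Real.log (J z) : ℝ) : ℂ) * v z ∂μ‖ ≤
      M * (Real.exp D * (2 * N * ((s - 1) * E) + K' * ((1/2 : ℝ) ^ N) ^ α)) := by
    rw [← integral_complex_ofReal, ← integral_mul_const,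
      ← integral_sub (integrable_of_cont μ hgvx)
        (integrable_of_cont μ hgcv)]
    have := norm_integral_le_of_norm_le_const (μ := μ)
        (f := fun z => ((-Real.log (J z) : ℝ) : ℂ) * v x - ((-Real.log (J z) : ℝ) : ℂ) * v z)
        (C := M * (Real.exp D * (2 * N * ((s - 1) * E) + K' * ((1/2 : ℝ) ^ N) ^ α)))
        (Filter.Eventually.of_forall fun z => by
          have hg : 0 ≤ -Real.log (J z) := by linarith [g_pos hR z]
          rw [← mul_sub, norm_mul, norm_ofReal_nn hg]
          exact mul_le_mul (hR.hM z) (hosc x z) (norm_nonneg _) hM0)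
    simpa using this
  have hfin := norm_add_le (((∫ z, -Real.log (J z) ∂μ : ℝ) : ℂ) * v x -
      ∫ z, ((-Real.log (J z) : ℝ) : ℂ) * v z ∂μ)
      (∫ z, ((-Real.log (J z) : ℝ) : ℂ) * v z ∂μ - ∫ z, a z ∂μ)
  rw [sub_add_sub_cancel] at hfin
  refine hfin.trans ?_
  have p1 : 0 ≤ M ^ 2 * B' * (s - 1) * N := by positivity
  have p2 : 0 ≤ M * (Real.exp D * (2 * E)) * (s - 1) := by positivity
  nlinarith

lemma continuous_concat {k : ℕ} (w : Fin k → 𝒜) :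
    Continuous (concat w : Omega 𝒜 → Omega 𝒜) := by
  refine continuous_pi fun n => ?_
  unfold concat
  by_cases h : n < k
  · simp only [h, dif_pos]; exact continuous_const
  · simp only [h, dif_neg, not_false_eq_true]; exact continuous_apply _

lemma continuous_JBirk (hR : Reg J α θ M D) (hJc : Continuous J) (k : ℕ) (w : Fin k → 𝒜) :
    Continuous fun x => JBirk J k w x := by
  induction k with
  | zero => simp only [JBirk_zero]; exact continuous_const
  | succ k ih =>
    obtain ⟨v, q, rfl⟩ := exists_snc w
    simp only [JBirk_snc hR.pos]
    exact ((ih v).comp (continuous_cons q)).mul (hJc.comp (continuous_cons q))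

lemma integral_iter (hR : Reg J α θ M D) (hJc : Continuous J) {μ : Measure (Omega 𝒜)}
    (hμ : IsGMeasure J μ) {φ : Omega 𝒜 → ℝ} (hφ : Continuous φ) (k : ℕ) :
    ∫ x, (∑ w : Fin k → 𝒜, JBirk J k w x * φ (concat w x)) ∂μ = ∫ x, φ x ∂μ := by
  induction k with
  | zero => simp [JBirk_zero, concat_zero]
  | succ k ih =>
    rw [← ih, ← gm_real hR hμ (φ := fun x => ∑ w : Fin k → 𝒜, JBirk J k w x * φ (concat w x))
      (continuous_finsetSum _ fun w _ =>
        (continuous_JBirk hR hJc k w).mul (hφ.comp (continuous_concat w)))]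
    congr 1; funext x
    rw [sum_snc]
    refine Finset.sum_congr rfl fun q _ => ?_
    rw [Finset.mul_sum]
    refine Finset.sum_congr rfl fun w _ => ?_
    rw [concat_snc, JBirk_snc hR.pos]; ring

lemma isClopen_cyl {k : ℕ} (w : Fin k → 𝒜) : IsClopen (cyl w) := by
  have : cyl w = ⋂ i : Fin k, (fun x : Omega 𝒜 => x (i : ℕ)) ⁻¹' {w i} := by
    ext x; simp [cyl]
  rw [this]
  exact isClopen_iInter_of_finite fun i => (isClopen_discrete _).preimage (continuous_apply _)

lemma concat_mem_cyl {k : ℕ} (w w' : Fin k → 𝒜) (x : Omega 𝒜) :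
    concat w' x ∈ cyl w ↔ w' = w := by
  have e : ∀ i : Fin k, concat w' x (i : ℕ) = w' i := fun i => by simp [concat]
  simp only [cyl, Set.mem_ofPred_eq, e]
  exact ⟨fun h => funext h, fun h i => by rw [h]⟩

lemma measure_cyl (hR : Reg J α θ M D) (hJc : Continuous J) {μ : Measure (Omega 𝒜)}
    (hμ : IsGMeasure J μ) {k : ℕ} (w : Fin k → 𝒜) :
    (μ (cyl w)).toReal = ∫ x, JBirk J k w x ∂μ := by
  have hφ : Continuous ((cyl w).indicator fun _ : Omega 𝒜 => (1 : ℝ)) :=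
    continuous_const.indicator (fun z hz => by
      rw [(isClopen_cyl w).frontier_eq] at hz; exact absurd hz (Set.notMem_empty z))
  have h := integral_iter hR hJc hμ hφ k
  rw [integral_indicator_const _ (isClopen_cyl w).isOpen.measurableSet] at h
  simp only [smul_eq_mul, mul_one] at h
  rw [← measureReal_def, ← h]
  congr 1; funext x
  rw [Finset.sum_eq_single w]
  · rw [Set.indicator_of_mem ((concat_mem_cyl w w x).2 rfl), mul_one]
  · intro w' _ hne
    rw [Set.indicator_of_notMem (fun hm => hne ((concat_mem_cyl w w' x).1 hm)), mul_zero]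
  · simp

lemma entropy_int (hR : Reg J α θ M D) (hJc : Continuous J) {μ : Measure (Omega 𝒜)}
    (hμ : IsGMeasure J μ) (k : ℕ) :
    ∫ x, (∑ w : Fin k → 𝒜, Real.negMulLog (JBirk J k w x)) ∂μ =
      k * ∫ z, -Real.log (J z) ∂μ := by
  have := hμ.1
  induction k with
  | zero => simp [JBirk_zero]
  | succ k ih =>
    have hgc : Continuous fun z => -Real.log (J z) := (hJc.log fun z => (hR.pos z).ne').neg
    have hEc : Continuous fun x => ∑ w : Fin k → 𝒜, Real.negMulLog (JBirk J k w x) :=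
      continuous_finsetSum _ fun w _ =>
        Real.continuous_negMulLog.comp (continuous_JBirk hR hJc k w)
    have h := gm_real hR hμ (hEc.add hgc)
    have e : ∀ x : Omega 𝒜, ∑ w : Fin (k+1) → 𝒜, Real.negMulLog (JBirk J (k+1) w x) =
        ∑ q : 𝒜, J (cons q x) * ((∑ w : Fin k → 𝒜, Real.negMulLog (JBirk J k w (cons q x))) +
          -Real.log (J (cons q x))) := by
      intro x
      rw [sum_snc]
      refine Finset.sum_congr rfl fun q _ => ?_
      have hs : -Real.log (J (cons q x)) =
          ∑ w : Fin k → 𝒜, JBirk J k w (cons q x) * -Real.log (J (cons q x)) := by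
        rw [← Finset.sum_mul, hR.hsum, one_mul]
      rw [hs, ← Finset.sum_add_distrib, Finset.mul_sum]
      refine Finset.sum_congr rfl fun w _ => ?_
      rw [JBirk_snc hR.pos, Real.negMulLog, Real.negMulLog,
        Real.log_mul (JBirk_pos _ _ _ _).ne' (hR.pos _).ne']
      ring
    simp_rw [e]
    refine h.trans ?_
    simp only [Pi.add_apply]
    rw [integral_add (integrable_of_cont μ hEc) (integrable_of_cont μ hgc), ih]
    push_cast; ring

lemma blockEntropy_ge (hR : Reg J α θ M D) (hJc : Continuous J) {μ : Measure (Omega 𝒜)}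
    (hμ : IsGMeasure J μ) (k : ℕ) :
    k * ∫ z, -Real.log (J z) ∂μ ≤ blockEntropy μ k := by
  have := hμ.1
  have hc := fun w : Fin k → 𝒜 => continuous_JBirk hR hJc k w
  have hnc : ∀ w : Fin k → 𝒜, Continuous fun x => Real.negMulLog (JBirk J k w x) :=
    fun w => Real.continuous_negMulLog.comp (hc w)
  rw [← entropy_int hR hJc hμ k, integral_finsetSum _ fun w _ => integrable_of_cont μ (hnc w)]
  unfold blockEntropy
  refine Finset.sum_le_sum fun w _ => ?_
  rw [measure_cyl hR hJc hμ]
  exact Real.concaveOn_negMulLog.le_map_integral Real.continuous_negMulLog.continuousOn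
    isClosed_Ici (Filter.Eventually.of_forall fun x => (JBirk_pos J k w x).le)
    (integrable_of_cont μ (hc w)) (integrable_of_cont μ (hnc w))

lemma blockEntropy_le (hR : Reg J α θ M D) (hJc : Continuous J) {μ : Measure (Omega 𝒜)}
    (hμ : IsGMeasure J μ) (k : ℕ) :
    blockEntropy μ k ≤ k * ∫ z, -Real.log (J z) ∂μ + D := by
  have := hμ.1
  have hc := fun w : Fin k → 𝒜 => continuous_JBirk hR hJc k w
  have hnc : ∀ w : Fin k → 𝒜, Continuous fun x => Real.negMulLog (JBirk J k w x) :=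
    fun w => Real.continuous_negMulLog.comp (hc w)
  have hcD' : ∀ w : Fin k → 𝒜, Continuous fun x => JBirk J k w x * D :=
    fun w => (hc w).mul continuous_const
  have hDsum : ∑ w : Fin k → 𝒜, ∫ x, JBirk J k w x * D ∂μ = D := by
    rw [← integral_finsetSum _ fun w _ => integrable_of_cont μ (hcD' w)]
    simp_rw [← Finset.sum_mul, hR.hsum]
    simp
  rw [← entropy_int hR hJc hμ k, integral_finsetSum _ fun w _ => integrable_of_cont μ (hnc w)]
  nth_rewrite 1 [← hDsum]
  rw [← Finset.sum_add_distrib]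
  unfold blockEntropy
  refine Finset.sum_le_sum fun w _ => ?_
  have hcD : Continuous fun x => JBirk J k w x * D := (hc w).mul continuous_const
  rw [measure_cyl hR hJc hμ, ← integral_add (integrable_of_cont μ (hnc w)) (integrable_of_cont μ hcD)]
  set m := ∫ x, JBirk J k w x ∂μ with hm
  have hlog : ∀ y, Real.log (JBirk J k w y) - D ≤ Real.log m := by
    intro y
    have h1 : ∀ x, Real.exp (Real.log (JBirk J k w y) - D) ≤ JBirk J k w x := by
      intro x
      have h1 := hR.dist k w x y
      have h2 : dOmega x y ^ α ≤ 1 :=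
        Real.rpow_le_one (dOmega_nonneg _ _) (dOmega_le_one _ _) hR.αpos.le
      have h3 : D * dOmega x y ^ α ≤ D := mul_le_of_le_one_right hR.Dnn h2
      have h4 := (abs_le.1 (h1.trans h3)).1
      rw [← Real.exp_log (JBirk_pos J k w x), Real.exp_le_exp]
      linarith
    have h2 : Real.exp (Real.log (JBirk J k w y) - D) ≤ m := by
      have := integral_mono (integrable_of_cont μ continuous_const)
        (integrable_of_cont μ (hc w)) h1
      simpa using this
    have h3 := Real.log_le_log (Real.exp_pos _) h2
    rwa [Real.log_exp] at h3
  have e : Real.negMulLog m = ∫ x, JBirk J k w x * -Real.log m ∂μ := by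
    rw [integral_mul_const, Real.negMulLog, ← hm]; ring
  have hcm : Continuous fun x => JBirk J k w x * -Real.log m := (hc w).mul continuous_const
  rw [e]
  refine integral_mono (integrable_of_cont μ hcm)
    (integrable_of_cont μ ((hnc w).add hcD)) fun x => ?_
  have hp := JBirk_pos J k w x
  simp only [Real.negMulLog]
  nlinarith [mul_le_mul_of_nonneg_left (hlog x) hp.le]

lemma KSentropy_eq (hR : Reg J α θ M D) (hJc : Continuous J) {μ : Measure (Omega 𝒜)}
    (hμ : IsGMeasure J μ) : KSentropy μ = ∫ z, -Real.log (J z) ∂μ := by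
  set h := ∫ z, -Real.log (J z) ∂μ with hh
  have hge : ∀ n : ℕ, h ≤ blockEntropy μ (n + 1) / (n + 1) := by
    intro n
    rw [le_div_iff₀ (by positivity)]
    have := blockEntropy_ge hR hJc hμ (n + 1)
    push_cast at this
    linarith
  have hle : ∀ n : ℕ, KSentropy μ ≤ h + D * (1 / ((n : ℝ) + 1)) := by
    intro n
    have h1 : KSentropy μ ≤ blockEntropy μ (n + 1) / (n + 1) :=
      ciInf_le (f := fun n : ℕ => blockEntropy μ (n + 1) / ((n : ℝ) + 1))
        ⟨h, by rintro _ ⟨n, rfl⟩; exact hge n⟩ n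
    refine h1.trans ?_
    rw [div_le_iff₀ (by positivity)]
    have := blockEntropy_le hR hJc hμ (n + 1)
    push_cast at this
    have e : (h + D * (1 / ((n : ℝ) + 1))) * (n + 1) = (n + 1) * h + D := by field_simp
    rw [e]; exact this
  apply le_antisymm
  · have ht : Tendsto (fun n : ℕ => h + D * (1 / ((n : ℝ) + 1))) atTop (𝓝 (h + D * 0)) :=
      tendsto_const_nhds.add (tendsto_one_div_add_atTop_nhds_zero_nat.const_mul D)
    have := ge_of_tendsto' ht hle
    simpa using this
  · exact le_ciInf hge

lemma exists_reg (hcard : 2 ≤ Fintype.card 𝒜) (hα : 0 < α) (hJ : IsGFunction J)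
    (hHolJ : IsHolderW α (fun z => Real.log (J z))) (x0 : Omega 𝒜) :
    ∃ θ M D : ℝ, Reg J α θ M D := by
  obtain ⟨C, hC⟩ := hHolJ
  obtain ⟨D, hD0, hD⟩ := JBirk_dist hJ.2.1 hα hC
  obtain ⟨m, -, hm⟩ := isCompact_univ.exists_isMinOn ⟨x0, Set.mem_univ _⟩ hJ.1.continuousOn
  have hmin : ∀ x, J m ≤ J x := fun x => hm (Set.mem_univ x)
  have hmp := hJ.2.1 m
  have hle : ∀ x, J x ≤ 1 - J m := by
    intro x
    have : Nontrivial 𝒜 := Fintype.one_lt_card_iff_nontrivial.1 (by omega)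
    obtain ⟨q, hq⟩ := exists_ne (x 0)
    have h1 := hJ.2.2 (shift x)
    have h2 : ∑ p ∈ ({x 0, q} : Finset 𝒜), J (cons p (shift x)) ≤
        ∑ p : 𝒜, J (cons p (shift x)) :=
      Finset.sum_le_sum_of_subset_of_nonneg (Finset.subset_univ _)
        fun p _ _ => (hJ.2.1 _).le
    rw [Finset.sum_pair hq.symm, h1, cons_shift] at h2
    have := hmin (cons q (shift x))
    linarith
  refine ⟨1 - J m, -Real.log (J m), D, ?_⟩
  exact
    { pos := hJ.2.1
      hsum := JBirk_sum hJ
      sum1 := hJ.2.2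
      le := hle
      θpos := by linarith [hle m]
      θlt := by linarith
      αpos := hα
      hM := fun x => neg_le_neg (Real.log_le_log hmp (hmin x))
      Dnn := hD0
      dist := hD }

end Helpers

/-- Lemma `lemma-limzeta` of the paper.
If `log J` is an `α`-Hölder `g`-function with unique `g`-measure `μ`, then for every
`α`-Hölder `a : Ω → ℂ` and every `x ∈ Ω`,
`lim_{s→1⁺} (s−1) ζ₊(s) = (1/h_μ(σ)) ∫ a dμ`. -/
theorem statement1 {𝒜 : Type} [Fintype 𝒜] [TopologicalSpace 𝒜] [DiscreteTopology 𝒜]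
    [MeasurableSpace 𝒜] [BorelSpace 𝒜] (hcard : 2 ≤ Fintype.card 𝒜)
    (α : ℝ) (hα : α ∈ Set.Ioo (0 : ℝ) 1)
    (J : Omega 𝒜 → ℝ) (hJ : IsGFunction J)
    (hHolJ : IsHolderW α (fun z => Real.log (J z)))
    (μ : Measure (Omega 𝒜)) (hμ : IsGMeasure J μ)
    (huniq : ∀ ν : Measure (Omega 𝒜), IsGMeasure J ν → ν = μ)
    (a : Omega 𝒜 → ℂ) (ha : IsHolderW α a) (x : Omega 𝒜) :
    Tendsto (fun s : ℝ => ((s : ℂ) - 1) * zetaPlus J a x s) (𝓝[>] (1 : ℝ))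
      (𝓝 ((((KSentropy μ)⁻¹ : ℝ) : ℂ) * ∫ z, a z ∂μ)) := by
  obtain ⟨θ, M, D, hR⟩ := exists_reg hcard hα.1 hJ hHolJ x
  have := hμ.1
  obtain ⟨C', hC'⟩ := ha
  have hC : ∀ y z, ‖a y - a z‖ ≤ |C'| * dOmega y z ^ α := fun y z =>
    (hC' y z).trans (mul_le_mul_of_nonneg_right (le_abs_self C')
      (Real.rpow_nonneg (dOmega_nonneg _ _) _))
  have hB : ∀ z, ‖a z‖ ≤ ‖a x‖ + |C'| := by
    intro z
    have h1 : dOmega z x ^ α ≤ 1 :=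
      Real.rpow_le_one (dOmega_nonneg _ _) (dOmega_le_one _ _) hα.1.le
    have h2 := hC z x
    have h3 : |C'| * dOmega z x ^ α ≤ |C'| := mul_le_of_le_one_right (abs_nonneg _) h1
    have h4 := norm_sub_norm_le (a z) (a x)
    linarith
  obtain ⟨c1, c2, hest⟩ := main_est hR hJ.1 hμ hB (abs_nonneg C') hC x
  rw [KSentropy_eq hR hJ.1 hμ]
  set h := ∫ z, -Real.log (J z) ∂μ with hh
  have hpos : 0 < h := by
    have hgc : Continuous fun z => -Real.log (J z) := (hJ.1.log fun z => (hR.pos z).ne').neg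
    have h1 := integral_mono (integrable_of_cont μ continuous_const)
      (integrable_of_cont μ hgc) (fun z => g_pos hR z)
    have h2 := Real.log_neg hR.θpos hR.θlt
    simp only [integral_const, probReal_univ, one_smul] at h1
    linarith
  have hev : ∀ᶠ s : ℝ in 𝓝[>] (1 : ℝ), 1 < s ∧ s ≤ 2 := by
    have : Set.Ioc (1:ℝ) 2 ∈ 𝓝[>] (1:ℝ) := Ioc_mem_nhdsGT (by norm_num)
    exact this
  have hlim : Tendsto (fun s : ℝ => (h : ℂ) * (((s - 1 : ℝ) : ℂ) * U J s a x)) (𝓝[>] (1 : ℝ))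
      (𝓝 (∫ z, a z ∂μ)) := by
    rw [Metric.tendsto_nhds]
    intro ε hε
    have ht : Tendsto (fun n : ℕ => c2 * (((1:ℝ)/2) ^ n) ^ α) atTop (𝓝 0) := by
      have h1 : Tendsto (fun n : ℕ => ((1:ℝ)/2) ^ n) atTop (𝓝 0) :=
        tendsto_pow_atTop_nhds_zero_of_lt_one (by norm_num) (by norm_num)
      have h2 := (h1.rpow_const (p := α) (Or.inr hα.1.le)).const_mul c2
      simpa [Real.zero_rpow hα.1.ne'] using h2
    obtain ⟨N, hN⟩ := (ht.eventually (gt_mem_nhds (half_pos hε))).exists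
    have ht2 : Tendsto (fun s : ℝ => c1 * (N + 1) * (s - 1)) (𝓝[>] (1:ℝ)) (𝓝 0) := by
      have : Continuous fun s : ℝ => c1 * (N + 1) * (s - 1) := by fun_prop
      have h1 := (this.tendsto 1).mono_left (nhdsWithin_le_nhds (s := Set.Ioi (1:ℝ)))
      simpa using h1
    filter_upwards [hev, ht2.eventually (gt_mem_nhds (half_pos hε))] with s hs hs'
    rw [dist_eq_norm]
    have := hest N s hs.1 hs.2
    linarith
  have hlim2 : Tendsto (fun s : ℝ => ((h⁻¹ : ℝ) : ℂ) * ((h : ℂ) * (((s - 1 : ℝ) : ℂ) * U J s a x))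
      - ((s - 1 : ℝ) : ℂ) * a x) (𝓝[>] (1 : ℝ))
      (𝓝 (((h⁻¹ : ℝ) : ℂ) * (∫ z, a z ∂μ) - 0)) := by
    refine (hlim.const_mul _).sub ?_
    have : Continuous fun s : ℝ => ((s - 1 : ℝ) : ℂ) * a x := by fun_prop
    have h1 := (this.tendsto 1).mono_left (nhdsWithin_le_nhds (s := Set.Ioi (1:ℝ)))
    simpa using h1
  rw [sub_zero] at hlim2
  refine hlim2.congr' ?_
  filter_upwards [hev] with s hs
  rw [U_eq_zeta hR hs.1 hB x]
  have hne : (h : ℂ) ≠ 0 := by exact_mod_cast hpos.ne'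
  push_cast
  rw [inv_mul_cancel_left₀ hne]
  ring

end GS
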